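/- arXiv:2302.07118 — 4 statements merged into one kernel-verified Lean document; each statement's English description precedes it below -/
import Mathlib

section
/- Let K be a field and Λ a finite-dimensional associative unital K-algebra. Let f : P_1 → P_0 be a homomorphism of finitely generated projective left Λ-modules and let X = coker(f). Let νf : νP_1 → νP_0 be the K-linear dual of the map Hom_Λ(f,Λ) : Hom_Λ(P_0,Λ) → Hom_Λ(P_1,Λ), and set T = ker(νf). Then for every finite-dimensional left Λ-module L one has dim_K Hom_Λ(P_0, L) − dim_K Hom_Λ(P_1, L) = dim_K Hom_Λ(X, L) − dim_K Hom_Λ(L, T). (When f is a minimal projective presentation of X, T is the Auslander–Reiten translate τX and the left-hand side equals g_X · dim L; this is the paper's Lemma 'interp'.) -/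
open LinearMap Module

variable (K Λ : Type*) [Field K] [Ring Λ] [Algebra K Λ]

section Nu

variable (P : Type*) [AddCommGroup P] [Module Λ P]

/-- Right multiplication `g ↦ g·a` on `Hom_Λ(P, Λ)`, where `(g·a)(p) = g(p) * a`. -/
def rmul (a : Λ) : (P →ₗ[Λ] Λ) →ₗ[K] (P →ₗ[Λ] Λ) where
  toFun g :=
    { toFun := fun p => g p * a
      map_add' := fun p q => by simp [add_mul]
      map_smul' := fun c p => by simp [smul_mul_assoc, mul_assoc] }
  map_add' g h := by ext p; simp [add_mul]
  map_smul' k g := by ext p; simp [smul_mul_assoc]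

@[simp] lemma rmul_apply (a : Λ) (g : P →ₗ[Λ] Λ) (p : P) :
    rmul K Λ P a g p = g p * a := rfl

lemma rmul_one (g : P →ₗ[Λ] Λ) : rmul K Λ P 1 g = g := by ext p; simp

lemma rmul_mul (a b : Λ) (g : P →ₗ[Λ] Λ) :
    rmul K Λ P (a * b) g = rmul K Λ P b (rmul K Λ P a g) := by ext p; simp [mul_assoc]

lemma rmul_add' (a b : Λ) (g : P →ₗ[Λ] Λ) :
    rmul K Λ P (a + b) g = rmul K Λ P a g + rmul K Λ P b g := by ext p; simp [mul_add]

lemma rmul_zero' (g : P →ₗ[Λ] Λ) : rmul K Λ P 0 g = 0 := by ext p; simp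

lemma rmul_ksmul (k : K) (a : Λ) (g : P →ₗ[Λ] Λ) :
    rmul K Λ P (k • a) g = k • rmul K Λ P a g := by ext p; simp [mul_smul_comm]

/-- `νP`, the `K`-linear dual of the right `Λ`-module `Hom_Λ(P, Λ)`. -/
abbrev Nu := (P →ₗ[Λ] Λ) →ₗ[K] K

instance : SMul Λ (Nu K Λ P) :=
  ⟨fun a φ => φ.comp (rmul K Λ P a)⟩

@[simp] lemma nu_smul_apply (a : Λ) (φ : Nu K Λ P) (g : P →ₗ[Λ] Λ) :
    (a • φ) g = φ (rmul K Λ P a g) := rfl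

/-- The left `Λ`-module structure on `νP` given by `(a • φ)(g) = φ(g · a)`. -/
instance : Module Λ (Nu K Λ P) where
  one_smul φ := by ext g; simp [rmul_one]
  mul_smul a b φ := by ext g; simp [rmul_mul]
  smul_zero a := by ext g; simp
  smul_add a φ ψ := by ext g; simp
  add_smul a b φ := by ext g; simp [rmul_add']
  zero_smul φ := by ext g; simp [rmul_zero']

instance : IsScalarTower K Λ (Nu K Λ P) :=
  ⟨fun k a φ => by ext g; simp [rmul_ksmul]⟩

instance : SMulCommClass Λ K (Nu K Λ P) :=
  ⟨fun a k φ => by ext g; simp⟩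

end Nu

section NuMap

variable (P₁ P₀ : Type*) [AddCommGroup P₁] [Module Λ P₁] [AddCommGroup P₀] [Module Λ P₀]

/-- Precomposition with `f`, as a map `Hom_Λ(P₀, Λ) → Hom_Λ(P₁, Λ)`. -/
def homf (f : P₁ →ₗ[Λ] P₀) : (P₀ →ₗ[Λ] Λ) →ₗ[K] (P₁ →ₗ[Λ] Λ) where
  toFun g := g.comp f
  map_add' g h := by ext p; simp
  map_smul' k g := by ext p; simp

@[simp] lemma homf_apply (f : P₁ →ₗ[Λ] P₀) (g : P₀ →ₗ[Λ] Λ) (p : P₁) :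
    homf K Λ P₁ P₀ f g p = g (f p) := rfl

/-- `νf : νP₁ → νP₀`, the `K`-linear dual of `Hom_Λ(f, Λ)`, as a map of left `Λ`-modules. -/
def nuMap (f : P₁ →ₗ[Λ] P₀) : Nu K Λ P₁ →ₗ[Λ] Nu K Λ P₀ where
  toFun φ := φ.comp (homf K Λ P₁ P₀ f)
  map_add' φ ψ := by ext g; simp
  map_smul' a φ := by
    ext g
    show φ (rmul K Λ P₁ a (homf K Λ P₁ P₀ f g)) = φ (homf K Λ P₁ P₀ f (rmul K Λ P₀ a g))
    congr 1

end NuMap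

section NakayamaDuality

variable (P L : Type*) [AddCommGroup P] [Module Λ P] [AddCommGroup L] [Module Λ L]

/-- Finitely generated projective modules have a finite dual basis. -/
lemma exists_finite_dual_basis [Module.Finite Λ P] [Module.Projective Λ P] :
    ∃ (n : ℕ) (p : Fin n → P) (g : Fin n → P →ₗ[Λ] Λ), ∀ x, ∑ i, g i x • p i = x := by
  obtain ⟨n, s, t, -, -, hst⟩ := Module.Finite.exists_comp_eq_id_of_projective Λ P
  refine ⟨n, fun i => s fun j => if i = j then 1 else 0, fun i => LinearMap.proj i ∘ₗ t, fun x => ?_⟩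
  exact (LinearMap.pi_apply_eq_sum_univ s (t x)).symm.trans (LinearMap.congr_fun hst x)

variable [Module K L] [SMulCommClass Λ K L]

lemma finiteDimensional_hom [Module.Finite Λ P] [FiniteDimensional K L] :
    FiniteDimensional K (P →ₗ[Λ] L) := by
  obtain ⟨n, s, hs⟩ := Module.Finite.exists_fin (R := Λ) (M := P)
  let ev : (P →ₗ[Λ] L) →ₗ[K] (Fin n → L) :=
    { toFun := fun h i => h (s i)
      map_add' := fun _ _ => rfl
      map_smul' := fun _ _ => rfl }
  refine FiniteDimensional.of_injective ev fun h h' hh => ?_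
  exact LinearMap.ext_on_range hs fun i => congrFun hh i

variable [IsScalarTower K Λ L]

/-- The natural map `D Hom_Λ(P, L) → Hom_Λ(L, νP)` sending `ξ` to
`l ↦ (g ↦ ξ (p ↦ g p • l))`. -/
def dualHomToNu : Dual K (P →ₗ[Λ] L) →ₗ[K] (L →ₗ[Λ] Nu K Λ P) where
  toFun ξ :=
    { toFun := fun l =>
        { toFun := fun g => ξ (g.smulRight l)
          map_add' := fun g h => by
            rw [← map_add]; congr 1; ext p; simp [add_smul]
          map_smul' := fun k g => by
            rw [RingHom.id_apply, ← map_smul]; congr 1; ext p; simp }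
      map_add' := fun l m => by
        ext g
        simp only [LinearMap.coe_mk, AddHom.coe_mk, LinearMap.add_apply]
        rw [← map_add]; congr 1; ext p; simp
      map_smul' := fun a l => by
        ext g
        simp only [LinearMap.coe_mk, AddHom.coe_mk, RingHom.id_apply, nu_smul_apply]
        congr 1; ext p; simp [mul_smul] }
  map_add' ξ η := rfl
  map_smul' k ξ := rfl

@[simp] lemma dualHomToNu_apply (ξ : Dual K (P →ₗ[Λ] L)) (l : L) (g : P →ₗ[Λ] Λ) :
    dualHomToNu K Λ P L ξ l g = ξ (g.smulRight l) := rfl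

lemma dualHomToNu_bijective [Module.Finite Λ P] [Module.Projective Λ P] :
    Function.Bijective (dualHomToNu K Λ P L) := by
  obtain ⟨n, p, g, hpg⟩ := exists_finite_dual_basis Λ P
  constructor
  · intro ξ η h
    ext u
    have hu : u = ∑ i, (g i).smulRight (u (p i)) := by
      ext x
      conv_lhs => rw [← hpg x]
      simp
    rw [hu, map_sum, map_sum]
    exact Finset.sum_congr rfl fun i _ =>
      LinearMap.congr_fun (LinearMap.congr_fun h (u (p i))) (g i)
  · intro u
    have hk (k : K) (l : L) : u (k • l) = k • u l := by
      rw [← algebraMap_smul Λ k l, map_smul, algebraMap_smul]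
    refine ⟨{ toFun := fun h => ∑ i, u (h (p i)) (g i)
              map_add' := fun h h' => by simp [Finset.sum_add_distrib]
              map_smul' := fun k h => by simp [hk, Finset.mul_sum] }, ?_⟩
    ext l h
    have hh : h = ∑ i, rmul K Λ P (h (p i)) (g i) := by
      ext x
      conv_lhs => rw [← hpg x]
      simp
    conv_rhs => rw [hh, map_sum]
    simp

end NakayamaDuality

section Exactness

variable (P₁ P₀ : Type*) [AddCommGroup P₁] [Module Λ P₁] [AddCommGroup P₀] [Module Λ P₀]
  (L : Type*) [AddCommGroup L] [Module Λ L] [Module K L] [SMulCommClass Λ K L]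

/-- `Hom_Λ(-, L)` turns cokernels into kernels. -/
lemma finrank_hom_coker (f : P₁ →ₗ[Λ] P₀) (X : Type*) [AddCommGroup X] [Module Λ X]
    (q : P₀ →ₗ[Λ] X) (hq : Function.Surjective q)
    (hqf : LinearMap.ker q = LinearMap.range f) :
    finrank K (X →ₗ[Λ] L) = finrank K (LinearMap.ker (LinearMap.lcomp K L f)) := by
  have hinj : Function.Injective (LinearMap.lcomp K L q) := fun u v h =>
    (LinearMap.cancel_right hq).1 h
  rw [← LinearMap.finrank_range_of_inj hinj]
  suffices h : LinearMap.range (LinearMap.lcomp K L q) = LinearMap.ker (LinearMap.lcomp K L f) by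
    rw [h]
  have hexact : Function.Exact f q := LinearMap.exact_iff.2 hqf
  ext u
  constructor
  · rintro ⟨v, rfl⟩
    ext x
    simp [hexact.apply_apply_eq_zero]
  · intro hu
    have hker : LinearMap.ker q ≤ LinearMap.ker u := by
      rw [hqf]
      rintro _ ⟨x, rfl⟩
      exact LinearMap.congr_fun hu x
    refine ⟨(LinearMap.ker q).liftQ u hker ∘ₗ (q.quotKerEquivOfSurjective hq).symm, ?_⟩
    ext x
    have : (q.quotKerEquivOfSurjective hq).symm (q x) = Submodule.Quotient.mk x := by
      rw [LinearEquiv.symm_apply_eq]; rfl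
    simp [this]

variable [IsScalarTower K Λ L]

/-- `Hom_Λ(L, ker νf)` is the kernel of the dual of `Hom_Λ(f, L)`. -/
lemma finrank_hom_ker_nuMap [Module.Finite Λ P₁] [Module.Projective Λ P₁]
    [Module.Finite Λ P₀] [Module.Projective Λ P₀] (f : P₁ →ₗ[Λ] P₀) :
    finrank K (L →ₗ[Λ] ↥(LinearMap.ker (nuMap K Λ P₁ P₀ f)))
      = finrank K (LinearMap.ker (LinearMap.lcomp K L f).dualMap) := by
  have hnat (ξ : Dual K (P₁ →ₗ[Λ] L)) : nuMap K Λ P₁ P₀ f ∘ₗ dualHomToNu K Λ P₁ L ξ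
      = dualHomToNu K Λ P₀ L ((LinearMap.lcomp K L f).dualMap ξ) := rfl
  have hmem (ξ : LinearMap.ker (LinearMap.lcomp K L f).dualMap) (l : L) :
      dualHomToNu K Λ P₁ L ξ l ∈ LinearMap.ker (nuMap K Λ P₁ P₀ f) := by
    have h := hnat ξ
    rw [LinearMap.mem_ker.1 ξ.2, map_zero] at h
    exact LinearMap.congr_fun h l
  let Φ : LinearMap.ker (LinearMap.lcomp K L f).dualMap →ₗ[K]
      (L →ₗ[Λ] ↥(LinearMap.ker (nuMap K Λ P₁ P₀ f))) :=
    { toFun := fun ξ => (dualHomToNu K Λ P₁ L ξ).codRestrict _ (hmem ξ)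
      map_add' := fun _ _ => rfl
      map_smul' := fun _ _ => rfl }
  refine (LinearEquiv.ofBijective Φ ⟨fun ξ η h => ?_, fun u => ?_⟩).finrank_eq.symm
  · exact Subtype.ext <| (dualHomToNu_bijective K Λ P₁ L).1 <|
      congrArg (Submodule.subtype _ ∘ₗ ·) h
  · obtain ⟨ξ, hξ⟩ := (dualHomToNu_bijective K Λ P₁ L).2 (Submodule.subtype _ ∘ₗ u)
    refine ⟨⟨ξ, ?_⟩, ?_⟩
    · apply (dualHomToNu_bijective K Λ P₀ L).1
      rw [← hnat, hξ, map_zero]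
      exact LinearMap.ext fun l => (u l).2
    · exact LinearMap.ext fun l => Subtype.ext (LinearMap.congr_fun hξ l)

end Exactness

/-- **Lemma `interp`.** Let `K` be a field and `Λ` a finite-dimensional `K`-algebra.
Let `f : P₁ → P₀` be a homomorphism of finitely generated projective left `Λ`-modules,
let `X = coker f` (presented by a surjection `q : P₀ → X` with `ker q = range f`),
and let `T = ker (νf : νP₁ → νP₀)`.  Then for every finite-dimensional left `Λ`-module `L`,
`dim Hom(P₀, L) - dim Hom(P₁, L) = dim Hom(X, L) - dim Hom(L, T)`. -/
theorem stmt1 [FiniteDimensional K Λ]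
    (P₁ P₀ : Type*) [AddCommGroup P₁] [Module Λ P₁]
    [Module.Finite Λ P₁] [Module.Projective Λ P₁]
    [AddCommGroup P₀] [Module Λ P₀] [Module.Finite Λ P₀] [Module.Projective Λ P₀]
    (f : P₁ →ₗ[Λ] P₀)
    (X : Type*) [AddCommGroup X] [Module Λ X]
    (q : P₀ →ₗ[Λ] X) (hq : Function.Surjective q)
    (hqf : LinearMap.ker q = LinearMap.range f)
    (L : Type*) [AddCommGroup L] [Module Λ L] [Module K L] [IsScalarTower K Λ L]
    [SMulCommClass Λ K L] [FiniteDimensional K L] :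
    (Module.finrank K (P₀ →ₗ[Λ] L) : ℤ) - Module.finrank K (P₁ →ₗ[Λ] L)
      = (Module.finrank K (X →ₗ[Λ] L) : ℤ)
        - Module.finrank K (L →ₗ[Λ] ↥(LinearMap.ker (nuMap K Λ P₁ P₀ f))) := by
  have := finiteDimensional_hom K Λ P₀ L
  have := finiteDimensional_hom K Λ P₁ L
  rw [finrank_hom_coker K Λ P₁ P₀ L f X q hq hqf, finrank_hom_ker_nuMap]
  have h₀ := (LinearMap.lcomp K L f).finrank_range_add_finrank_ker
  have h₁ := (LinearMap.lcomp K L f).dualMap.finrank_range_add_finrank_ker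
  rw [LinearMap.finrank_range_dualMap_eq_finrank_range, Subspace.dual_finrank_eq] at h₁
  lia
end

section
/- Let K be a field and Λ a finite-dimensional associative unital K-algebra. Let X, T, M be finite-dimensional left Λ-modules with Hom_Λ(X, T) = 0. Then the following are equivalent: (i) dim_K Hom_Λ(X, M) = dim_K Hom_Λ(M, T), and for every Λ-submodule M' ⊆ M one has dim_K Hom_Λ(X, M') ≤ dim_K Hom_Λ(M', T); (ii) Hom_Λ(X, M) = 0 and Hom_Λ(M, T) = 0. (When X is indecomposable τ-rigid and T = τX, condition (i) says that M is semistable with respect to the g-vector g_X, and condition (ii) says that M lies in the τ-perpendicular category J(X); this is the paper's Lemma 'equiv', i.e. Proposition 3.13 of Brüstle–Smith–Treffinger.) -/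
open Module

/-- The space of module homomorphisms between finite-dimensional modules over a `K`-algebra is
finite-dimensional over `K`. -/
theorem finiteDimensional_linearMap_of_isScalarTower (K Λ X M : Type*) [Field K] [Ring Λ]
    [Algebra K Λ]
    [AddCommGroup X] [Module Λ X] [Module K X] [IsScalarTower K Λ X] [FiniteDimensional K X]
    [AddCommGroup M] [Module Λ M] [Module K M] [IsScalarTower K Λ M]
    [SMulCommClass Λ K M] [FiniteDimensional K M] :
    FiniteDimensional K (X →ₗ[Λ] M) :=
  FiniteDimensional.of_injective (LinearMap.restrictScalarsₗ K Λ X M K)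
    (LinearMap.restrictScalars_injective K)

/-- A homomorphism out of the trace of `X` in `M` vanishes if there are no nonzero homomorphisms
from `X` to its codomain. -/
theorem linearMap_trace_eq_zero {Λ X T M : Type*} [Ring Λ] [AddCommGroup X] [Module Λ X]
    [AddCommGroup T] [Module Λ T] [AddCommGroup M] [Module Λ M]
    (hXT : ∀ f : X →ₗ[Λ] T, f = 0)
    (g : ↥(⨆ f : X →ₗ[Λ] M, LinearMap.range f) →ₗ[Λ] T) : g = 0 := by
  have hle : (⨆ f : X →ₗ[Λ] M, LinearMap.range f) ≤
      (LinearMap.ker g).map (Submodule.subtype _) := by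
    refine iSup_le fun f => ?_
    rintro _ ⟨x, rfl⟩
    have hmem (y : X) : f y ∈ ⨆ f : X →ₗ[Λ] M, LinearMap.range f :=
      Submodule.mem_iSup_of_mem f ⟨y, rfl⟩
    exact ⟨⟨f x, hmem x⟩, LinearMap.congr_fun (hXT (g ∘ₗ f.codRestrict _ hmem)) x, rfl⟩
  ext ⟨m, hm⟩
  obtain ⟨y, hy, rfl⟩ := hle hm
  exact hy

/-- **Lemma `equiv`** (Proposition 3.13 of Brüstle–Smith–Treffinger, reformulated).
Let `K` be a field, `Λ` a finite-dimensional `K`-algebra, and `X, T, M`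
finite-dimensional left `Λ`-modules with `Hom_Λ(X, T) = 0`.  Then
`dim Hom(X, M) = dim Hom(M, T)` together with `dim Hom(X, M') ≤ dim Hom(M', T)` for all
submodules `M' ⊆ M` holds if and only if `Hom(X, M) = 0` and `Hom(M, T) = 0`. -/
theorem stmt4 (K Λ : Type*) [Field K] [Ring Λ] [Algebra K Λ] [FiniteDimensional K Λ]
    (X T M : Type*)
    [AddCommGroup X] [Module Λ X] [Module K X] [IsScalarTower K Λ X]
    [SMulCommClass Λ K X] [FiniteDimensional K X]
    [AddCommGroup T] [Module Λ T] [Module K T] [IsScalarTower K Λ T]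
    [SMulCommClass Λ K T] [FiniteDimensional K T]
    [AddCommGroup M] [Module Λ M] [Module K M] [IsScalarTower K Λ M]
    [SMulCommClass Λ K M] [FiniteDimensional K M]
    (hXT : ∀ f : X →ₗ[Λ] T, f = 0) :
    (finrank K (X →ₗ[Λ] M) = finrank K (M →ₗ[Λ] T) ∧
        ∀ M' : Submodule Λ M,
          finrank K (X →ₗ[Λ] ↥M') ≤ finrank K (↥M' →ₗ[Λ] T))
      ↔ ((∀ f : X →ₗ[Λ] M, f = 0) ∧ (∀ f : M →ₗ[Λ] T, f = 0)) := by
  have := finiteDimensional_linearMap_of_isScalarTower K Λ X M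
  have := finiteDimensional_linearMap_of_isScalarTower K Λ M T
  constructor
  · rintro ⟨heq, hle⟩
    set N : Submodule Λ M := ⨆ f : X →ₗ[Λ] M, LinearMap.range f
    have : FiniteDimensional K N :=
      FiniteDimensional.of_injective (N.subtype.restrictScalars K) N.injective_subtype
    have := finiteDimensional_linearMap_of_isScalarTower K Λ X N
    have : Subsingleton (N →ₗ[Λ] T) :=
      subsingleton_of_forall_eq 0 (linearMap_trace_eq_zero hXT)
    have hXN : finrank K (X →ₗ[Λ] N) = 0 :=
      Nat.le_zero.mp ((hle N).trans_eq finrank_zero_of_subsingleton)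
    have : Subsingleton (X →ₗ[Λ] N) := finrank_zero_iff.mp hXN
    have hXM (f : X →ₗ[Λ] M) : f = 0 := by
      have hmem (x : X) : f x ∈ N := Submodule.mem_iSup_of_mem f ⟨x, rfl⟩
      ext x
      exact congrArg Subtype.val
        (LinearMap.congr_fun (Subsingleton.elim (f.codRestrict N hmem) 0) x)
    have : Subsingleton (X →ₗ[Λ] M) := subsingleton_of_forall_eq 0 hXM
    rw [finrank_zero_of_subsingleton] at heq
    have : Subsingleton (M →ₗ[Λ] T) := finrank_zero_iff.mp heq.symm
    exact ⟨hXM, fun f => Subsingleton.elim f 0⟩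
  · rintro ⟨hXM, hMT⟩
    have : Subsingleton (X →ₗ[Λ] M) := subsingleton_of_forall_eq 0 hXM
    have : Subsingleton (M →ₗ[Λ] T) := subsingleton_of_forall_eq 0 hMT
    refine ⟨by simp only [finrank_zero_of_subsingleton], fun M' => ?_⟩
    have : Subsingleton (X →ₗ[Λ] M') := subsingleton_of_forall_eq 0 fun f => by
      ext x
      exact LinearMap.congr_fun (hXM (M'.subtype ∘ₗ f)) x
    rw [finrank_zero_of_subsingleton]
    exact Nat.zero_le _
end

section
/- Let K be a field, Λ a finite-dimensional associative unital K-algebra, and X a nonzero finite-dimensional indecomposable left Λ-module. Let rad(X,X) ⊆ End_Λ(X) denote the set of non-invertible Λ-module endomorphisms of X. Then the submodule Σ_{f ∈ rad(X,X)} im(f) is a proper submodule of X; equivalently, β(X) := X / Σ_{f ∈ rad(X,X)} im(f) is nonzero. -/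
open Module

/-- **Fitting's lemma**: a non-invertible endomorphism of an indecomposable module of finite length
is nilpotent. -/
theorem Module.End.isNilpotent_of_not_isUnit {R M : Type*} [Ring R] [AddCommGroup M] [Module R M]
    [IsNoetherian R M] [IsArtinian R M]
    (hind : ∀ A B : Submodule R M, IsCompl A B → A = ⊥ ∨ B = ⊥)
    {f : Module.End R M} (hf : ¬ IsUnit f) : IsNilpotent f := by
  obtain ⟨n, hn, hn0⟩ :=
    (f.eventually_isCompl_ker_pow_range_pow.and (Filter.eventually_ge_atTop 1)).exists
  rcases hind _ _ hn with h | h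
  · have hu : IsUnit (f ^ n) := (Module.End.isUnit_iff _).2
      (IsArtinian.bijective_of_injective_endomorphism _ (LinearMap.ker_eq_bot.1 h))
    exact absurd ((isUnit_pow_iff (by omega)).1 hu) hf
  · exact ⟨n, LinearMap.range_eq_bot.1 h⟩

/-- A non-invertible endomorphism of an indecomposable module of finite length lies in the Jacobson
radical of the endomorphism ring. -/
theorem Module.End.mem_jacobson_of_not_isUnit {R M : Type*} [Ring R] [AddCommGroup M] [Module R M]
    [IsNoetherian R M] [IsArtinian R M]
    (hind : ∀ A B : Submodule R M, IsCompl A B → A = ⊥ ∨ B = ⊥)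
    {f : Module.End R M} (hf : ¬ IsUnit f) : f ∈ Ring.jacobson (Module.End R M) := by
  rw [← Ideal.jacobson_bot, Ideal.mem_jacobson_iff]
  intro g
  have hgf : ¬ IsUnit (g * f) := by
    intro h
    have hinj : Function.Injective f :=
      Function.Injective.of_comp (f := g) ((Module.End.isUnit_iff _).1 h).injective
    exact hf ((Module.End.isUnit_iff _).2
      (IsArtinian.bijective_of_injective_endomorphism _ hinj))
  obtain ⟨u, hu⟩ := (Module.End.isNilpotent_of_not_isUnit hind hgf).isUnit_add_one
  refine ⟨↑u⁻¹, ?_⟩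
  have h : (↑u⁻¹ : Module.End R M) * (g * f + 1) = 1 := by rw [← hu, Units.inv_mul]
  rw [Ideal.mem_bot, mul_assoc, sub_eq_zero, ← h, mul_add, mul_one]

/-- **The radical sum is proper.**  Let `K` be a field, `Λ` a finite-dimensional
`K`-algebra and `X` a nonzero finite-dimensional indecomposable left `Λ`-module.  Let
`rad(X,X)` be the set of non-invertible endomorphisms of `X`.  Then
`Σ_{f ∈ rad(X,X)} im(f)` is a proper submodule of `X` (equivalently, `β(X) ≠ 0`). -/
theorem stmt8 (K Λ : Type*) [Field K] [Ring Λ] [Algebra K Λ] [FiniteDimensional K Λ]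
    (X : Type*) [AddCommGroup X] [Module Λ X] [Module K X] [IsScalarTower K Λ X]
    [SMulCommClass Λ K X] [FiniteDimensional K X]
    (hX : Nontrivial X)
    (hind : ∀ A B : Submodule Λ X, IsCompl A B → A = ⊥ ∨ B = ⊥) :
    (⨆ f ∈ {f : Module.End Λ X | ¬ IsUnit f}, LinearMap.range f) ≠ ⊤ := by
  have : IsNoetherian Λ X := isNoetherian_of_tower K inferInstance
  have : IsArtinian Λ X := isArtinian_of_tower K inferInstance
  have : Module.Finite (Module.End Λ X) X := .of_restrictScalars_finite K _ _
  intro htop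
  refine (Submodule.jacobson_smul_lt_top (R := Module.End Λ X) (M := X) ⊤).ne ?_
  refine eq_top_iff.2 fun x _ ↦ ?_
  have hx : x ∈ ⨆ f ∈ {f : Module.End Λ X | ¬ IsUnit f}, LinearMap.range f :=
    htop ▸ Submodule.mem_top
  rw [iSup_subtype'] at hx
  induction hx using Submodule.iSup_induction' with
  | mem f y hy =>
    obtain ⟨z, rfl⟩ := hy
    exact Submodule.smul_mem_smul (Module.End.mem_jacobson_of_not_isUnit hind f.2)
      (Submodule.mem_top (x := z))
  | zero => exact zero_mem _
  | add y z _ _ hy hz => exact add_mem (hy Submodule.mem_top) (hz Submodule.mem_top)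
end

section
/- Let K be a field, Λ a finite-dimensional associative unital K-algebra, X a nonzero finite-dimensional indecomposable left Λ-module, and N a left Λ-module with Hom_Λ(X, N) = 0. Set B = X / Σ_{f ∈ rad(X,X)} im(f), where rad(X,X) ⊆ End_Λ(X) is the set of non-invertible endomorphisms of X. Then Hom_Λ(B, N) = 0 and Hom_Λ(X, B) ≠ 0; in particular, if N is finite-dimensional then dim_K Hom_Λ(X, B) > dim_K Hom_Λ(B, N). (When X is τ-rigid and N = τX, this is the fact g_X · dim β(X) > 0 used in the proof of the paper's Proposition on linear independence of dimension vectors.) -/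
open Module

section

variable {R X : Type*} [Ring R] [AddCommGroup X] [Module R X]

/-- **Fitting's lemma**: a non-invertible endomorphism of an indecomposable module of finite
length is nilpotent. -/
theorem Module.End.isNilpotent_of_not_isUnit_of_indecomposable [IsNoetherian R X] [IsArtinian R X]
    (hind : ∀ A B : Submodule R X, IsCompl A B → A = ⊥ ∨ B = ⊥)
    {f : Module.End R X} (hf : ¬ IsUnit f) : IsNilpotent f := by
  obtain ⟨k, hk, hk0⟩ := (f.eventually_isCompl_ker_pow_range_pow.and
    (Filter.eventually_ne_atTop 0)).exists
  rcases hind _ _ hk with h | h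
  · refine absurd ((isUnit_pow_iff hk0).mp ?_) hf
    rw [Module.End.isUnit_iff]
    exact IsArtinian.bijective_of_injective_endomorphism _ (LinearMap.ker_eq_bot.mp h)
  · exact ⟨k, LinearMap.range_eq_bot.mp h⟩

/-- In an Artinian module, a composite `g * f` is non-invertible as soon as `f` is. -/
theorem Module.End.not_isUnit_mul_of_not_isUnit_right [IsArtinian R X]
    {f : Module.End R X} (hf : ¬ IsUnit f) (g : Module.End R X) : ¬ IsUnit (g * f) := by
  intro h
  rw [Module.End.isUnit_iff] at h hf
  exact hf (IsArtinian.bijective_of_injective_endomorphism f (Function.Injective.of_comp h.1))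

/-- The images of the non-invertible endomorphisms of an indecomposable module of finite length
do not span it, provided the module is finitely generated over its endomorphism ring. -/
theorem Module.End.iSup_range_nonunits_ne_top [IsNoetherian R X] [IsArtinian R X] [Nontrivial X]
    [Module.Finite (Module.End R X) X]
    (hind : ∀ A B : Submodule R X, IsCompl A B → A = ⊥ ∨ B = ⊥) :
    (⨆ f ∈ {f : Module.End R X | ¬ IsUnit f}, LinearMap.range f) ≠ ⊤ := by
  obtain ⟨M, hM, -⟩ := (eq_top_or_exists_le_coatom
    (⊥ : Submodule (Module.End R X) X)).resolve_left bot_ne_top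
  have apply_mem (f : Module.End R X) (hf : ¬ IsUnit f) (x : X) : f x ∈ M := by
    by_contra hfx
    have htop : M ⊔ Submodule.span (Module.End R X) {f x} = ⊤ :=
      hM.2 _ (left_lt_sup.mpr (by simpa using hfx))
    obtain ⟨m, hm, y, hy, hmy⟩ := Submodule.mem_sup.mp (htop ▸ Submodule.mem_top : x ∈ _)
    obtain ⟨g, rfl⟩ := Submodule.mem_span_singleton.mp hy
    obtain ⟨u, hu⟩ := (isNilpotent_of_not_isUnit_of_indecomposable hind
      (not_isUnit_mul_of_not_isUnit_right hf g)).isUnit_one_sub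
    have hum : (u : Module.End R X) x = m := by
      rw [hu, ← sub_eq_of_eq_add hmy.symm]
      simp
    have hx : x = (↑u⁻¹ : Module.End R X) • m := by
      rw [← hum, Module.End.smul_def, ← Module.End.mul_apply, Units.inv_mul, Module.End.one_apply]
    exact hfx (M.smul_mem f (hx ▸ M.smul_mem _ hm))
  intro htop
  refine hM.1 (eq_top_iff.mpr fun x _ ↦ ?_)
  have hx : x ∈ ⨆ f ∈ {f : Module.End R X | ¬ IsUnit f}, LinearMap.range f :=
    htop ▸ Submodule.mem_top
  rw [iSup_subtype'] at hx
  induction hx using Submodule.iSup_induction' with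
  | mem f x hx =>
    obtain ⟨y, rfl⟩ := hx
    exact apply_mem f.1 f.2 y
  | zero => exact M.zero_mem
  | add x y _ _ hx hy => exact M.add_mem (hx trivial) (hy trivial)

/-- The space of `A`-linear maps between finite-dimensional modules is finite-dimensional. -/
theorem FiniteDimensional.linearMap_of_smulCommClass (K A V W : Type*) [Field K] [Ring A]
    [Algebra K A] [AddCommGroup V] [Module A V] [Module K V] [IsScalarTower K A V]
    [AddCommGroup W] [Module A W] [Module K W] [IsScalarTower K A W] [SMulCommClass A K W]
    [FiniteDimensional K V] [FiniteDimensional K W] : FiniteDimensional K (V →ₗ[A] W) :=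
  Module.Finite.of_injective (LinearMap.restrictScalarsₗ K A V W K)
    (LinearMap.restrictScalars_injective K)

end

/-- **`β(X)` detects positivity of `g_X · dim β(X)`.**  Let `K` be a field, `Λ` a
finite-dimensional `K`-algebra, `X` a nonzero finite-dimensional indecomposable left
`Λ`-module, and `N` a module with `Hom_Λ(X, N) = 0`.  Let
`B = β(X) = X / Σ_{f ∈ rad(X,X)} im(f)`.  Then `Hom_Λ(B, N) = 0` and `Hom_Λ(X, B) ≠ 0`;
in particular, if `N` is finite-dimensional then
`dim_K Hom_Λ(X, B) > dim_K Hom_Λ(B, N)`. -/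
theorem stmt9 (K Λ : Type*) [Field K] [Ring Λ] [Algebra K Λ] [FiniteDimensional K Λ]
    (X : Type*) [AddCommGroup X] [Module Λ X] [Module K X] [IsScalarTower K Λ X]
    [SMulCommClass Λ K X] [FiniteDimensional K X]
    (hX : Nontrivial X)
    (hind : ∀ A B : Submodule Λ X, IsCompl A B → A = ⊥ ∨ B = ⊥)
    (N : Type*) [AddCommGroup N] [Module Λ N] [Module K N] [IsScalarTower K Λ N]
    [SMulCommClass Λ K N]
    (hXN : ∀ f : X →ₗ[Λ] N, f = 0) :
    (∀ g : (X ⧸ ⨆ f ∈ {f : Module.End Λ X | ¬ IsUnit f}, LinearMap.range f) →ₗ[Λ] N,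
        g = 0) ∧
    (∃ h : X →ₗ[Λ] (X ⧸ ⨆ f ∈ {f : Module.End Λ X | ¬ IsUnit f}, LinearMap.range f),
        h ≠ 0) ∧
    (FiniteDimensional K N →
      finrank K ((X ⧸ ⨆ f ∈ {f : Module.End Λ X | ¬ IsUnit f}, LinearMap.range f) →ₗ[Λ] N)
        < finrank K
          (X →ₗ[Λ] (X ⧸ ⨆ f ∈ {f : Module.End Λ X | ¬ IsUnit f}, LinearMap.range f))) := by
  have : IsNoetherian Λ X := isNoetherian_of_tower K inferInstance
  have : IsArtinian Λ X := isArtinian_of_tower K inferInstance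
  have : IsScalarTower K (Module.End Λ X) X := ⟨fun _ _ _ ↦ rfl⟩
  have : Module.Finite (Module.End Λ X) X := .of_restrictScalars_finite K _ X
  have hne := Module.End.iSup_range_nonunits_ne_top hind
  generalize (⨆ f ∈ {f : Module.End Λ X | ¬ IsUnit f}, LinearMap.range f) = P at hne ⊢
  have hzero (g : (X ⧸ P) →ₗ[Λ] N) : g = 0 :=
    P.linearMap_qext (by simpa using hXN (g ∘ₗ P.mkQ))
  have hmkQ : P.mkQ ≠ 0 := fun h ↦ hne (by rw [← P.ker_mkQ, h, LinearMap.ker_zero])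
  refine ⟨hzero, ⟨P.mkQ, hmkQ⟩, fun _ ↦ ?_⟩
  have : Subsingleton ((X ⧸ P) →ₗ[Λ] N) := ⟨fun a b ↦ (hzero a).trans (hzero b).symm⟩
  have : Nontrivial (X →ₗ[Λ] (X ⧸ P)) := ⟨P.mkQ, 0, hmkQ⟩
  have : FiniteDimensional K (X ⧸ P) :=
    Module.Finite.of_surjective (P.mkQ.restrictScalars K) P.mkQ_surjective
  have := FiniteDimensional.linearMap_of_smulCommClass K Λ X (X ⧸ P)
  rw [finrank_zero_of_subsingleton]
  exact finrank_pos
end
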